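/- For every integer e ≥ 1 and general points, ℓ(L(10e, 10e−2, 6^{2e})) = 0, i.e. this system contains exactly one curve up to scalar; its virtual dimension is v = −12e − 1, so the system is special. -/

import Mathlib

open MvPolynomial

/-- The iterated partial derivative corresponding to the multi-index `ν`. -/
noncomputable def mderiv (ν : Fin 3 → ℕ) :
    MvPolynomial (Fin 3) ℂ →ₗ[ℂ] MvPolynomial (Fin 3) ℂ :=
  ((pderiv (R := ℂ) (0 : Fin 3)).toLinearMap ^ ν 0) ∘ₗ
  ((pderiv (R := ℂ) (1 : Fin 3)).toLinearMap ^ ν 1) ∘ₗ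
  ((pderiv (R := ℂ) (2 : Fin 3)).toLinearMap ^ ν 2)

/-- The linear system `L(d; m)` of homogeneous forms of degree `d` in three variables
all of whose partial derivatives of order `< m i` vanish at the point `p i`,
i.e. plane curves of degree `d` with multiplicity at least `m i` at `p i`. -/
noncomputable def linSys {k : ℕ} (p : Fin k → Fin 3 → ℂ) (d : ℕ) (m : Fin k → ℕ) :
    Submodule ℂ (MvPolynomial (Fin 3) ℂ) :=
  (homogeneousSubmodule (Fin 3) ℂ d) ⊓
    ⨅ (i : Fin k), ⨅ (ν : Fin 3 → ℕ), ⨅ (_ : ν 0 + ν 1 + ν 2 < m i),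
      LinearMap.ker ((aeval (p i)).toLinearMap ∘ₗ mderiv ν)

/-- The projective dimension `ℓ` of the linear system (`-1` means empty). -/
noncomputable def projDim {k : ℕ} (p : Fin k → Fin 3 → ℂ) (d : ℕ) (m : Fin k → ℕ) : ℤ :=
  (Module.finrank ℂ (linSys p d m) : ℤ) - 1

/-- The virtual dimension `v = d(d+3)/2 - ∑ mᵢ(mᵢ+1)/2`. -/
def virtDim {k : ℕ} (d : ℕ) (m : Fin k → ℕ) : ℤ :=
  ((d : ℤ) * (d + 3)) / 2 - ∑ i : Fin k, ((m i : ℤ) * (m i + 1)) / 2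

/-- The quasi-homogeneous multiplicity vector `(m₀, 6, …, 6)` on `n + 1` points. -/
def qh (n m0 : ℕ) : Fin (n + 1) → ℕ := fun i => if i = 0 then m0 else 6

/-- A property `Q` of configurations of `k` points of `ℙ²` (given by nonzero homogeneous
coordinate vectors) holds for points in general position: there is a nonzero polynomial
in the coordinates such that `Q` holds whenever it does not vanish. -/
def Generically (k : ℕ) (Q : (Fin k → Fin 3 → ℂ) → Prop) : Prop :=
  ∃ P : MvPolynomial (Fin k × Fin 3) ℂ, P ≠ 0 ∧
    ∀ p : Fin k → Fin 3 → ℂ, (∀ i, p i ≠ 0) →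
      eval (fun x => p x.1 x.2) P ≠ 0 → Q p

/-- The ideal of polynomials vanishing at the point `p` of affine space. -/
noncomputable def pointIdeal (p : Fin 3 → ℂ) : Ideal (MvPolynomial (Fin 3) ℂ) :=
  Ideal.span (Set.range fun j => X j - C (p j))

lemma aeval_mem_pow_of_mem_pointIdeal_pow {R : Type*} [CommRing R] [Algebra ℂ R]
    (g : Fin 3 → R) (p : Fin 3 → ℂ) {J : Ideal R}
    (hg : ∀ j, g j - algebraMap ℂ R (p j) ∈ J) {n : ℕ} {F : MvPolynomial (Fin 3) ℂ}
    (hF : F ∈ pointIdeal p ^ n) : aeval g F ∈ J ^ n := by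
  have h : (pointIdeal p).map (aeval g) ≤ J := by
    rw [pointIdeal, Ideal.map_span, Ideal.span_le]
    rintro _ ⟨_, ⟨j, rfl⟩, rfl⟩
    simpa using hg j
  have h2 := Ideal.mem_map_of_mem (aeval g) hF
  rw [Ideal.map_pow] at h2
  exact Ideal.pow_right_mono h n h2

lemma aeval_eq_zero_of_mem_pointIdeal {p : Fin 3 → ℂ} {F : MvPolynomial (Fin 3) ℂ}
    (hF : F ∈ pointIdeal p) : aeval p F = 0 := by
  have := aeval_mem_pow_of_mem_pointIdeal_pow p p (J := ⊥) (n := 1) (F := F) (by simp)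
    (by simpa using hF)
  simpa using this

lemma Derivation.apply_mem_pow {R A : Type*} [CommRing R] [CommRing A] [Algebra R A]
    (D : Derivation R A A) (I : Ideal A) {n : ℕ} {a : A} (ha : a ∈ I ^ (n + 1)) :
    D a ∈ I ^ n := by
  induction n generalizing a with
  | zero => simp
  | succ n ih =>
    rw [pow_succ] at ha
    induction ha using Submodule.mul_induction_on' with
    | mem_mul_mem x hx y hy =>
      rw [D.leibniz, smul_eq_mul, smul_eq_mul]
      refine add_mem (Ideal.mul_mem_right _ _ hx) ?_
      rw [mul_comm, pow_succ]
      exact Ideal.mul_mem_mul (ih hx) hy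
    | add x hx y hy h1 h2 => rw [map_add]; exact add_mem h1 h2

lemma pderiv_pow_mem_pow (I : Ideal (MvPolynomial (Fin 3) ℂ)) (i : Fin 3) {n k : ℕ}
    {F : MvPolynomial (Fin 3) ℂ} (hF : F ∈ I ^ (n + k)) :
    ((pderiv (R := ℂ) i).toLinearMap ^ k) F ∈ I ^ n := by
  induction k generalizing F with
  | zero => simpa using hF
  | succ k ih =>
    rw [pow_succ, Module.End.mul_apply]
    exact ih (Derivation.apply_mem_pow _ I hF)

lemma aeval_mderiv_eq_zero {p : Fin 3 → ℂ} {m : ℕ} {F : MvPolynomial (Fin 3) ℂ}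
    (hF : F ∈ pointIdeal p ^ m) {ν : Fin 3 → ℕ} (hν : ν 0 + ν 1 + ν 2 < m) :
    aeval p (mderiv ν F) = 0 := by
  apply aeval_eq_zero_of_mem_pointIdeal
  obtain ⟨k, rfl⟩ := Nat.exists_eq_add_of_lt hν
  rw [← pow_one (pointIdeal p)]
  refine pderiv_pow_mem_pow _ 0 (pderiv_pow_mem_pow _ 1 (pderiv_pow_mem_pow _ 2 ?_))
  exact Ideal.pow_le_pow_right (by omega) hF

lemma coeff_pderiv_pow (i : Fin 3) (k : ℕ) (s : Fin 3 →₀ ℕ) :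
    ∃ c : ℂ, c ≠ 0 ∧ ∀ F : MvPolynomial (Fin 3) ℂ,
      coeff s (((pderiv (R := ℂ) i).toLinearMap ^ k) F) =
        c * coeff (s + Finsupp.single i k) F := by
  induction k with
  | zero => exact ⟨1, one_ne_zero, by simp⟩
  | succ k ih =>
    obtain ⟨c, hc, h⟩ := ih
    refine ⟨c * ((s + Finsupp.single i k) i + 1 : ℕ), mul_ne_zero hc (Nat.cast_ne_zero.mpr (by omega)), fun F => ?_⟩
    rw [pow_succ, Module.End.mul_apply, h, Derivation.coeFn_coe, coeff_pderiv, add_assoc,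
      ← Finsupp.single_add]
    push_cast
    ring

lemma coeff_eq_zero_of_constantCoeff_mderiv {F : MvPolynomial (Fin 3) ℂ} {s : Fin 3 →₀ ℕ}
    (h : coeff 0 (mderiv s F) = 0) : coeff s F = 0 := by
  obtain ⟨c0, h0, e0⟩ := coeff_pderiv_pow 0 (s 0) 0
  obtain ⟨c1, h1, e1⟩ := coeff_pderiv_pow 1 (s 1) (0 + Finsupp.single 0 (s 0))
  obtain ⟨c2, h2, e2⟩ := coeff_pderiv_pow 2 (s 2)
    (0 + Finsupp.single 0 (s 0) + Finsupp.single 1 (s 1))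
  rw [mderiv, LinearMap.comp_apply, LinearMap.comp_apply, e0, e1, e2] at h
  have hs : 0 + Finsupp.single 0 (s 0) + Finsupp.single 1 (s 1) + Finsupp.single 2 (s 2) = s := by
    ext i
    fin_cases i <;> simp
  rw [hs] at h
  simpa [h0, h1, h2] using h

/-- Translation of the origin to the point `p`. -/
noncomputable def translateAt (p : Fin 3 → ℂ) :
    MvPolynomial (Fin 3) ℂ →ₐ[ℂ] MvPolynomial (Fin 3) ℂ :=
  aeval fun j => X j + C (p j)

lemma translate_neg_translate (p : Fin 3 → ℂ) (F : MvPolynomial (Fin 3) ℂ) :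
    translateAt (-p) (translateAt p F) = F := by
  have : (translateAt (-p)).comp (translateAt p) = AlgHom.id ℂ _ := by
    apply MvPolynomial.algHom_ext
    intro j
    simp [translateAt, algebraMap_eq]
  exact DFunLike.congr_fun this F

lemma coeff_zero_translate (p : Fin 3 → ℂ) (F : MvPolynomial (Fin 3) ℂ) :
    coeff 0 (translateAt p F) = aeval p F := by
  have : (aeval (0 : Fin 3 → ℂ)).comp (translateAt p) = aeval p := by
    apply MvPolynomial.algHom_ext
    intro j
    simp [translateAt]
  rw [← this, AlgHom.comp_apply, ← constantCoeff_eq]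
  simp

lemma pderiv_translate (p : Fin 3 → ℂ) (i : Fin 3) (F : MvPolynomial (Fin 3) ℂ) :
    pderiv i (translateAt p F) = translateAt p (pderiv i F) := by
  induction F using MvPolynomial.induction_on with
  | C a => simp [translateAt, algebraMap_eq]
  | add f g hf hg => simp [hf, hg]
  | mul_X f j hf =>
    simp only [map_mul, Derivation.leibniz, hf, map_add, smul_eq_mul]
    congr 2
    by_cases h : j = i
    · subst h; simp [translateAt]
    · simp [translateAt, pderiv_X_of_ne h]

lemma pderiv_pow_translate (p : Fin 3 → ℂ) (i : Fin 3) (k : ℕ) (F : MvPolynomial (Fin 3) ℂ) :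
    ((pderiv (R := ℂ) i).toLinearMap ^ k) (translateAt p F) =
      translateAt p (((pderiv (R := ℂ) i).toLinearMap ^ k) F) := by
  induction k generalizing F with
  | zero => simp
  | succ k ih =>
    rw [pow_succ, Module.End.mul_apply, Module.End.mul_apply, ← ih]
    exact congrArg _ (pderiv_translate p i F)

lemma mderiv_translate (p : Fin 3 → ℂ) (ν : Fin 3 → ℕ) (F : MvPolynomial (Fin 3) ℂ) :
    mderiv ν (translateAt p F) = translateAt p (mderiv ν F) := by
  simp only [mderiv, LinearMap.comp_apply, pderiv_pow_translate]

lemma mem_pointIdeal_pow_iff {p : Fin 3 → ℂ} {m : ℕ} {F : MvPolynomial (Fin 3) ℂ} :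
    F ∈ pointIdeal p ^ m ↔
      ∀ ν : Fin 3 → ℕ, ν 0 + ν 1 + ν 2 < m → aeval p (mderiv ν F) = 0 := by
  refine ⟨fun hF ν hν => aeval_mderiv_eq_zero hF hν, fun h => ?_⟩
  have h1 : translateAt p F ∈ idealOfVars (Fin 3) ℂ ^ m := by
    rw [mem_pow_idealOfVars_iff']
    intro s hs
    apply coeff_eq_zero_of_constantCoeff_mderiv
    rw [mderiv_translate, coeff_zero_translate]
    apply h
    rwa [Finsupp.degree_eq_sum, Fin.sum_univ_three] at hs
  rw [← translate_neg_translate p F]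
  have h2 := Ideal.mem_map_of_mem (translateAt (-p)) h1
  rw [Ideal.map_pow, Ideal.map_span, ← Set.range_comp] at h2
  convert h2 using 2
  rw [pointIdeal]
  congr 2
  ext j
  simp [translateAt, sub_eq_add_neg]

lemma mem_pointIdeal_of_aeval_eq_zero {p : Fin 3 → ℂ} {F : MvPolynomial (Fin 3) ℂ}
    (hF : aeval p F = 0) : F ∈ pointIdeal p := by
  rw [← pow_one (pointIdeal p), mem_pointIdeal_pow_iff]
  intro ν hν
  obtain ⟨h0, h1, h2⟩ : ν 0 = 0 ∧ ν 1 = 0 ∧ ν 2 = 0 := by omega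
  simpa [mderiv, h0, h1, h2] using hF

lemma mem_linSys_iff {k : ℕ} {p : Fin k → Fin 3 → ℂ} {d : ℕ} {m : Fin k → ℕ}
    {F : MvPolynomial (Fin 3) ℂ} :
    F ∈ linSys p d m ↔ F.IsHomogeneous d ∧ ∀ i, F ∈ pointIdeal (p i) ^ m i := by
  simp [linSys, Submodule.mem_inf, mem_pointIdeal_pow_iff]

lemma exists_polynomial_injective_mulVec {σ I J : Type*} [Fintype I] [Fintype J]
    [DecidableEq J] (A : Matrix I J (MvPolynomial σ ℂ)) (q : σ → ℂ)
    (hq : ∀ c, (A.map (eval q)).mulVec c = 0 → c = 0) :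
    ∃ P : MvPolynomial σ ℂ, P ≠ 0 ∧ ∀ p, eval p P ≠ 0 →
      ∀ c, (A.map (eval p)).mulVec c = 0 → c = 0 := by
  classical
  obtain ⟨g, hg⟩ := LinearMap.exists_leftInverse_of_injective (Matrix.toLin' (A.map (eval q)))
    (LinearMap.ker_eq_bot'.mpr fun c hc => hq c (by simpa using hc))
  set B := LinearMap.toMatrix' g with hB
  have hBA : B * A.map (eval q) = 1 := by
    rw [hB, ← LinearMap.toMatrix'_toLin' (A.map (eval q)), ← LinearMap.toMatrix'_comp, hg,
      LinearMap.toMatrix'_id]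
  let M : Matrix J I (MvPolynomial σ ℂ) := B.map C
  have hdet : ∀ p, eval p ((M * A).det) = (B * A.map (eval p)).det := by
    intro p
    rw [RingHom.map_det, RingHom.mapMatrix_apply, Matrix.map_mul, Matrix.map_map]
    congr 2
    ext i j
    simp
  refine ⟨(M * A).det, fun h => ?_, fun p hp c hc => ?_⟩
  · have := hdet q
    simp [h, hBA] at this
  · rw [hdet] at hp
    refine Matrix.eq_zero_of_mulVec_eq_zero hp ?_
    rw [← Matrix.mulVec_mulVec, hc, Matrix.mulVec_zero]

/-- The matrix of the conditions defining `linSys p d m`, together with the additional condition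
`φ F = 0`, with respect to a family `b` of forms; the entries are polynomials in the coordinates
of the points. -/
noncomputable def conditionMatrix {k : ℕ} {ι : Type*} (m : Fin k → ℕ) (N : ℕ)
    (φ : MvPolynomial (Fin 3) ℂ →ₗ[ℂ] ℂ) (b : ι → MvPolynomial (Fin 3) ℂ) :
    Matrix (Option (Fin k × (Fin 3 → Fin N))) ι (MvPolynomial (Fin k × Fin 3) ℂ) :=
  Matrix.of fun r j => r.elim (C (φ (b j))) fun x =>
    if (x.2 0 : ℕ) + x.2 1 + x.2 2 < m x.1 then
      rename (fun l => (x.1, l)) (mderiv (fun l => x.2 l) (b j)) else 0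

lemma conditionMatrix_mulVec_none {k N : ℕ} {ι : Type*} [Fintype ι] (m : Fin k → ℕ)
    (φ : MvPolynomial (Fin 3) ℂ →ₗ[ℂ] ℂ) (b : ι → MvPolynomial (Fin 3) ℂ)
    (p : Fin k × Fin 3 → ℂ) (c : ι → ℂ) :
    ((conditionMatrix m N φ b).map (eval p)).mulVec c none = φ (∑ j, c j • b j) := by
  simp [Matrix.mulVec, dotProduct, conditionMatrix, mul_comm]

lemma conditionMatrix_mulVec_some {k N : ℕ} {ι : Type*} [Fintype ι] (m : Fin k → ℕ)
    (φ : MvPolynomial (Fin 3) ℂ →ₗ[ℂ] ℂ) (b : ι → MvPolynomial (Fin 3) ℂ)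
    (p : Fin k × Fin 3 → ℂ) (c : ι → ℂ) (i : Fin k) (ν : Fin 3 → Fin N)
    (h : (ν 0 : ℕ) + ν 1 + ν 2 < m i) :
    ((conditionMatrix m N φ b).map (eval p)).mulVec c (some (i, ν)) =
      aeval (fun l => p (i, l)) (mderiv (fun l => ν l) (∑ j, c j • b j)) := by
  simp only [Matrix.mulVec, dotProduct, conditionMatrix, Matrix.map_apply, Matrix.of_apply,
    Option.elim_some, h, if_true, map_sum, map_smul, smul_eq_mul, eval_rename]
  refine Finset.sum_congr rfl fun j _ => ?_
  rw [mul_comm]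
  rfl

lemma conditionMatrix_mulVec_some_of_not_lt {k N : ℕ} {ι : Type*} [Fintype ι] (m : Fin k → ℕ)
    (φ : MvPolynomial (Fin 3) ℂ →ₗ[ℂ] ℂ) (b : ι → MvPolynomial (Fin 3) ℂ)
    (p : Fin k × Fin 3 → ℂ) (c : ι → ℂ) (i : Fin k) (ν : Fin 3 → Fin N)
    (h : ¬ (ν 0 : ℕ) + ν 1 + ν 2 < m i) :
    ((conditionMatrix m N φ b).map (eval p)).mulVec c (some (i, ν)) = 0 := by
  simp [Matrix.mulVec, dotProduct, conditionMatrix, h]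

lemma conditionMatrix_mulVec_eq_zero_iff {k d N : ℕ} {ι : Type*} [Fintype ι] {m : Fin k → ℕ}
    (hN : ∀ i, m i ≤ N) (φ : MvPolynomial (Fin 3) ℂ →ₗ[ℂ] ℂ)
    (b : ι → homogeneousSubmodule (Fin 3) ℂ d) (p : Fin k → Fin 3 → ℂ) (c : ι → ℂ) :
    ((conditionMatrix m N φ fun j => (b j : MvPolynomial (Fin 3) ℂ)).map
        (eval fun x => p x.1 x.2)).mulVec c = 0 ↔
      ((∑ j, c j • b j : homogeneousSubmodule (Fin 3) ℂ d) : MvPolynomial (Fin 3) ℂ) ∈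
          linSys p d m ∧
        φ (∑ j, c j • b j : homogeneousSubmodule (Fin 3) ℂ d) = 0 := by
  have hF : ((∑ j, c j • b j : homogeneousSubmodule (Fin 3) ℂ d) : MvPolynomial (Fin 3) ℂ) =
    ∑ j, c j • (b j : MvPolynomial (Fin 3) ℂ) := by simp
  constructor
  · intro h
    refine ⟨mem_linSys_iff.mpr ⟨(mem_homogeneousSubmodule _ _).mp (Subtype.prop _), fun i =>
      mem_pointIdeal_pow_iff.mpr fun ν hν => ?_⟩, ?_⟩
    · have hlt : ∀ l, ν l < N := by
        intro l
        have := hN i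
        fin_cases l <;> simp <;> omega
      have h2 := conditionMatrix_mulVec_some (N := N) m φ
        (fun j => (b j : MvPolynomial (Fin 3) ℂ)) (fun x => p x.1 x.2) c i
        (fun l => ⟨ν l, hlt l⟩) hν
      rw [h, ← hF] at h2
      exact h2.symm
    · rw [hF, ← conditionMatrix_mulVec_none (N := N) m φ
        (fun j => (b j : MvPolynomial (Fin 3) ℂ)) (fun x => p x.1 x.2) c, h]
      rfl
  · rintro ⟨h1, h2⟩
    ext r
    rcases r with _ | ⟨i, ν⟩
    · rw [conditionMatrix_mulVec_none, ← hF, h2]; rfl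
    · by_cases h : (ν 0 : ℕ) + ν 1 + ν 2 < m i
      · rw [conditionMatrix_mulVec_some _ _ _ _ _ _ _ h, ← hF]
        exact mem_pointIdeal_pow_iff.mp ((mem_linSys_iff.mp h1).2 i) _ h
      · rw [conditionMatrix_mulVec_some_of_not_lt _ _ _ _ _ _ _ h]; rfl

lemma exists_polynomial_finrank_linSys_le_one {k d : ℕ} (m : Fin k → ℕ)
    (q : Fin k → Fin 3 → ℂ) (φ : MvPolynomial (Fin 3) ℂ →ₗ[ℂ] ℂ)
    (hq : ∀ F ∈ linSys q d m, φ F = 0 → F = 0) :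
    ∃ P : MvPolynomial (Fin k × Fin 3) ℂ, P ≠ 0 ∧ ∀ p : Fin k → Fin 3 → ℂ,
      eval (fun x => p x.1 x.2) P ≠ 0 → Module.finrank ℂ (linSys p d m) ≤ 1 := by
  classical
  have : Module.Finite ℂ (homogeneousSubmodule (Fin 3) ℂ d) :=
    Module.Finite.iff_fg.mpr (homogeneousSubmodule_fg _ _ d)
  let b := Module.finBasis ℂ (homogeneousSubmodule (Fin 3) ℂ d)
  have hN : ∀ i, m i ≤ ∑ i, m i := fun i =>
    Finset.single_le_sum (by simp) (Finset.mem_univ i)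
  obtain ⟨P, hP0, hP⟩ := exists_polynomial_injective_mulVec
    (conditionMatrix m (∑ i, m i) φ fun j => (b j : MvPolynomial (Fin 3) ℂ))
    (fun x => q x.1 x.2) (by
      intro c hc
      have h := (conditionMatrix_mulVec_eq_zero_iff hN φ b q c).mp hc
      have h2 : (∑ j, c j • b j : homogeneousSubmodule (Fin 3) ℂ d) = 0 :=
        Subtype.ext (hq _ h.1 h.2)
      rw [← b.equivFun_symm_apply] at h2
      exact b.equivFun.symm.map_eq_zero_iff.mp h2)
  refine ⟨P, hP0, fun p hp => ?_⟩
  rw [← Module.finrank_self ℂ]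
  refine LinearMap.finrank_le_finrank_of_injective (f := φ.comp (linSys p d m).subtype) ?_
  rw [← LinearMap.ker_eq_bot]
  refine LinearMap.ker_eq_bot'.mpr fun F hF => ?_
  have hsum := b.sum_equivFun ⟨F, F.2.1⟩
  have h := hP (fun x => p x.1 x.2) hp (b.equivFun ⟨F, F.2.1⟩)
    ((conditionMatrix_mulVec_eq_zero_iff hN φ b p _).mpr (by rw [hsum]; exact ⟨F.2, hF⟩))
  have h3 : (⟨F, F.2.1⟩ : homogeneousSubmodule (Fin 3) ℂ d) = 0 := by simpa using h
  exact Subtype.ext (congrArg Subtype.val h3 : (F : MvPolynomial (Fin 3) ℂ) = 0)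

/-- A linear substitution carrying the forms with a large multiplicity at `(0 : 0 : 1)` to those
with a large multiplicity at `a`. -/
noncomputable def moveVertex (a : Fin 3 → ℂ) :
    MvPolynomial (Fin 3) ℂ →ₐ[ℂ] MvPolynomial (Fin 3) ℂ :=
  aeval ![C (a 2) * X 0 - C (a 0) * X 2, C (a 2) * X 1 - C (a 1) * X 2, X 2]

lemma moveVertex_injective {a : Fin 3 → ℂ} (ha : a 2 ≠ 0) :
    Function.Injective (moveVertex a) := by
  let θ : MvPolynomial (Fin 3) ℂ →ₐ[ℂ] MvPolynomial (Fin 3) ℂ :=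
    aeval ![C (a 2)⁻¹ * (X 0 + C (a 0) * X 2), C (a 2)⁻¹ * (X 1 + C (a 1) * X 2), X 2]
  have h1 : (C (a 2) * C (a 2)⁻¹ : MvPolynomial (Fin 3) ℂ) = 1 := by
    rw [← C_mul, mul_inv_cancel₀ ha, C_1]
  have h : θ.comp (moveVertex a) = AlgHom.id ℂ _ := by
    apply MvPolynomial.algHom_ext
    intro j
    fin_cases j
    · simp [θ, moveVertex, algebraMap_eq]
      linear_combination (X 0 + C (a 0) * X 2) * h1
    · simp [θ, moveVertex, algebraMap_eq]
      linear_combination (X 1 + C (a 1) * X 2) * h1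
    · simp [θ, moveVertex]
  exact Function.LeftInverse.injective (g := θ) fun F => DFunLike.congr_fun h F

lemma isHomogeneous_moveVertex (a : Fin 3 → ℂ) {F : MvPolynomial (Fin 3) ℂ} {n : ℕ}
    (hF : F.IsHomogeneous n) : (moveVertex a F).IsHomogeneous n := by
  rw [← one_mul n]
  refine hF.aeval _ fun j => ?_
  fin_cases j
  · exact ((isHomogeneous_X _ _).C_mul _).sub ((isHomogeneous_X _ _).C_mul _)
  · exact ((isHomogeneous_X _ _).C_mul _).sub ((isHomogeneous_X _ _).C_mul _)
  · exact isHomogeneous_X _ _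

lemma moveVertex_monomial_mem (a : Fin 3 → ℂ) (s : Fin 3 →₀ ℕ) (c : ℂ) :
    moveVertex a (monomial s c) ∈ pointIdeal a ^ (s 0 + s 1) := by
  have h0 : C (a 2) * X 0 - C (a 0) * X 2 ∈ pointIdeal a :=
    mem_pointIdeal_of_aeval_eq_zero (by simp [mul_comm])
  have h1 : C (a 2) * X 1 - C (a 1) * X 2 ∈ pointIdeal a :=
    mem_pointIdeal_of_aeval_eq_zero (by simp [mul_comm])
  rw [moveVertex, aeval_monomial, Finsupp.prod_fintype _ _ (by simp), Fin.prod_univ_three]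
  refine Ideal.mul_mem_left _ _ (Ideal.mul_mem_right _ _ ?_)
  rw [pow_add]
  exact Ideal.mul_mem_mul (Ideal.pow_mem_pow h0 _) (Ideal.pow_mem_pow h1 _)

/-- The exponents of the monomials of degree `e` and of degree at most `1` in the last variable. -/
noncomputable def vertexExponent (e : ℕ) : Fin e ⊕ Fin (e + 1) → Fin 3 →₀ ℕ :=
  Sum.elim (fun j => Finsupp.equivFunOnFinite.symm ![j, e - 1 - j, 1])
    (fun j => Finsupp.equivFunOnFinite.symm ![j, e - j, 0])

lemma vertexExponent_injective (e : ℕ) : Function.Injective (vertexExponent e) := by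
  rintro (i | i) (j | j) h
  all_goals
    have h0 := DFunLike.congr_fun h 0
    have h2 := DFunLike.congr_fun h 2
    simp [vertexExponent] at h0 h2
  · rw [Fin.ext h0]
  · rw [Fin.ext h0]

lemma degree_vertexExponent (e : ℕ) (k : Fin e ⊕ Fin (e + 1)) :
    (vertexExponent e k).degree = e := by
  rw [Finsupp.degree_eq_sum, Fin.sum_univ_three]
  rcases k with j | j <;> have := j.2 <;> simp [vertexExponent] <;> omega

lemma le_vertexExponent_add (e : ℕ) (k : Fin e ⊕ Fin (e + 1)) :
    e - 1 ≤ vertexExponent e k 0 + vertexExponent e k 1 := by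
  rcases k with j | j <;> have := j.2 <;> simp [vertexExponent] <;> omega

lemma exists_form_through (e : ℕ) {a : Fin 3 → ℂ} (ha : a 2 ≠ 0) (p : Fin (2 * e) → Fin 3 → ℂ) :
    ∃ G : MvPolynomial (Fin 3) ℂ, G ≠ 0 ∧ G.IsHomogeneous e ∧ G ∈ pointIdeal a ^ (e - 1) ∧
      ∀ i, G ∈ pointIdeal (p i) := by
  classical
  let S : (Fin e ⊕ Fin (e + 1) → ℂ) →ₗ[ℂ] MvPolynomial (Fin 3) ℂ :=
    Fintype.linearCombination ℂ fun k => monomial (vertexExponent e k) 1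
  have hS : ∀ c, S c = ∑ k, monomial (vertexExponent e k) (c k) := by
    intro c
    simp [S, Fintype.linearCombination_apply, smul_monomial]
  let T : (Fin e ⊕ Fin (e + 1) → ℂ) →ₗ[ℂ] (Fin (2 * e) → ℂ) :=
    LinearMap.pi fun i => (aeval (p i)).toLinearMap ∘ₗ (moveVertex a).toLinearMap ∘ₗ S
  obtain ⟨c, hc, hc0⟩ := (Submodule.ne_bot_iff _).mp
    (LinearMap.ker_ne_bot_of_finrank_lt (f := T) (by simp; omega))
  refine ⟨moveVertex a (S c), fun h => hc0 ?_, isHomogeneous_moveVertex a ?_, ?_, fun i => ?_⟩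
  · have h1 : S c = 0 := (map_eq_zero_iff _ (moveVertex_injective ha)).mp h
    ext k
    have h2 := congrArg (coeff (vertexExponent e k)) h1
    simpa [hS, coeff_sum, coeff_monomial, (vertexExponent_injective e).eq_iff,
      -Fintype.sum_sum_type] using h2
  · rw [hS]
    exact IsHomogeneous.sum _ _ _ fun k _ => isHomogeneous_monomial _ (degree_vertexExponent e k)
  · rw [hS, map_sum]
    exact sum_mem fun k _ => Ideal.pow_le_pow_right (le_vertexExponent_add e k)
      (moveVertex_monomial_mem a _ _)
  · exact mem_pointIdeal_of_aeval_eq_zero (congrFun (LinearMap.mem_ker.mp hc) i)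

lemma exists_line_through (a b : Fin 3 → ℂ) :
    ∃ G : MvPolynomial (Fin 3) ℂ, G ≠ 0 ∧ G.IsHomogeneous 1 ∧ G ∈ pointIdeal a ∧
      G ∈ pointIdeal b := by
  obtain ⟨G, h0, h1, -, h⟩ := exists_form_through 1 (a := ![0, 0, 1]) (by simp) ![a, b]
  exact ⟨G, h0, h1, h 0, h 1⟩

lemma one_le_finrank_linSys {e : ℕ} (he : 1 ≤ e) (p : Fin (2 * e + 1) → Fin 3 → ℂ)
    (hp : p 0 2 ≠ 0) :
    1 ≤ Module.finrank ℂ (linSys p (10 * e) (qh (2 * e) (10 * e - 2))) := by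
  have : Module.Finite ℂ (homogeneousSubmodule (Fin 3) ℂ (10 * e)) :=
    Module.Finite.iff_fg.mpr (homogeneousSubmodule_fg _ _ _)
  have : Module.Finite ℂ (linSys p (10 * e) (qh (2 * e) (10 * e - 2))) :=
    Submodule.finiteDimensional_of_le inf_le_left
  rw [Submodule.one_le_finrank_iff, Submodule.ne_bot_iff]
  obtain ⟨G, hG0, hGe, hGa, hG⟩ := exists_form_through e hp fun i => p i.succ
  choose l hl0 hl1 hla hl using fun i : Fin (2 * e) => exists_line_through (p 0) (p i.succ)
  refine ⟨G ^ 2 * ∏ i, l i ^ 4, mem_linSys_iff.mpr ⟨?_, fun i => ?_⟩,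
    mul_ne_zero (pow_ne_zero _ hG0) (Finset.prod_ne_zero_iff.mpr fun i _ => pow_ne_zero _ (hl0 i))⟩
  · have h := (hGe.pow 2).mul
      (IsHomogeneous.prod Finset.univ _ (fun _ => 1 * 4) fun i _ => (hl1 i).pow 4)
    convert h using 1
    simp
    ring
  · induction i using Fin.cases with
    | zero =>
      have h1 : G ^ 2 ∈ pointIdeal (p 0) ^ ((e - 1) * 2) := by
        rw [pow_mul]
        exact Ideal.pow_mem_pow hGa 2
      have h2 : ∏ i, l i ^ 4 ∈ ∏ _i : Fin (2 * e), pointIdeal (p 0) ^ 4 :=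
        Ideal.prod_mem_prod fun i _ => Ideal.pow_mem_pow (hla i) 4
      have h3 := Ideal.mul_mem_mul h1 h2
      rw [Finset.prod_const, ← pow_mul, ← pow_add] at h3
      convert h3 using 2
      simp [qh]
      omega
    | succ i =>
      have h6 : qh (2 * e) (10 * e - 2) i.succ = 2 + 4 := by simp [qh]
      rw [h6, pow_add]
      refine Ideal.mul_mem_mul (Ideal.pow_mem_pow (hG i) 2) ?_
      rw [← Finset.mul_prod_erase _ _ (Finset.mem_univ i)]
      exact Ideal.mul_mem_right _ _ (Ideal.pow_mem_pow (hl i) 4)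

lemma degree_eq_of_mem_support {F : MvPolynomial (Fin 3) ℂ} {d : ℕ} (hF : F.IsHomogeneous d)
    {s : Fin 3 →₀ ℕ} (hs : s ∈ F.support) : s 0 + s 1 + s 2 = d := by
  rw [← Fin.sum_univ_three, ← Finsupp.degree_eq_sum]
  by_contra hd
  exact mem_support_iff.mp hs (hF.coeff_eq_zero hd)

/-- The expression in `z` over `ℂ[t]` of the form `F` in the affine chart `(1 : t : z)`. -/
noncomputable def dehomogenize (F : MvPolynomial (Fin 3) ℂ) : Polynomial (Polynomial ℂ) :=
  aeval ![1, Polynomial.C Polynomial.X, Polynomial.X] F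

lemma coeff_dehomogenize (F : MvPolynomial (Fin 3) ℂ) (k : ℕ) :
    (dehomogenize F).coeff k = ∑ s ∈ F.support,
      if k = s 2 then Polynomial.C (coeff s F) * Polynomial.X ^ s 1 else 0 := by
  rw [dehomogenize, aeval_def, eval₂_eq', Polynomial.finsetSum_coeff]
  refine Finset.sum_congr rfl fun s _ => ?_
  have h : algebraMap ℂ (Polynomial (Polynomial ℂ)) (coeff s F) *
      ∏ i, (![1, Polynomial.C Polynomial.X, Polynomial.X] :
        Fin 3 → Polynomial (Polynomial ℂ)) i ^ s i =
      Polynomial.C (Polynomial.C (coeff s F) * Polynomial.X ^ s 1) * Polynomial.X ^ s 2 := by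
    rw [Fin.prod_univ_three]
    simp [Polynomial.algebraMap_apply, mul_assoc]
  rw [h, Polynomial.coeff_C_mul_X_pow]

lemma coeff_dehomogenize_coeff {F : MvPolynomial (Fin 3) ℂ} {d : ℕ} (hF : F.IsHomogeneous d)
    {s : Fin 3 →₀ ℕ} (hs : s.degree = d) :
    ((dehomogenize F).coeff (s 2)).coeff (s 1) = coeff s F := by
  rw [coeff_dehomogenize, Polynomial.finsetSum_coeff, Finset.sum_eq_single s]
  · simp
  · intro s' hs' hne
    split_ifs with h
    · rw [Polynomial.coeff_C_mul_X_pow, if_neg]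
      intro h1
      refine hne (Finsupp.ext fun i => ?_)
      have hd := degree_eq_of_mem_support hF hs'
      rw [Finsupp.degree_eq_sum, Fin.sum_univ_three] at hs
      fin_cases i <;> simp <;> omega
    · simp
  · intro h
    simp [notMem_support_iff.mp h]

lemma eq_zero_of_dehomogenize_eq_zero {F : MvPolynomial (Fin 3) ℂ} {d : ℕ}
    (hF : F.IsHomogeneous d) (h : dehomogenize F = 0) : F = 0 := by
  ext s
  by_cases hs : s.degree = d
  · rw [← coeff_dehomogenize_coeff hF hs, h]
    simp
  · rw [hF.coeff_eq_zero hs, coeff_zero]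

lemma natDegree_coeff_dehomogenize_le {F : MvPolynomial (Fin 3) ℂ} {d : ℕ}
    (hF : F.IsHomogeneous d) (k : ℕ) : ((dehomogenize F).coeff k).natDegree ≤ d - k := by
  rw [coeff_dehomogenize]
  refine Polynomial.natDegree_sum_le_of_forall_le _ _ fun s hs => ?_
  split_ifs with h
  · refine (Polynomial.natDegree_C_mul_X_pow_le _ _).trans ?_
    have := degree_eq_of_mem_support hF hs
    omega
  · simp

lemma coeff_dehomogenize_eq_zero {F : MvPolynomial (Fin 3) ℂ} {d m : ℕ}
    (hF : F.IsHomogeneous d) (hm : F ∈ pointIdeal ![0, 0, 1] ^ m) {k : ℕ} (hk : d < m + k) :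
    (dehomogenize F).coeff k = 0 := by
  by_cases hkd : k ≤ d
  swap
  · rw [coeff_dehomogenize]
    refine Finset.sum_eq_zero fun s hs => if_neg ?_
    have := degree_eq_of_mem_support hF hs
    omega
  let G : Polynomial (Polynomial ℂ) :=
    aeval ![Polynomial.X, Polynomial.C Polynomial.X * Polynomial.X, 1] F
  have hG : G.coeff (d - k) = (dehomogenize F).coeff k := by
    rw [coeff_dehomogenize]
    simp only [G]
    rw [aeval_def, eval₂_eq', Polynomial.finsetSum_coeff]
    refine Finset.sum_congr rfl fun s hs => ?_
    have := degree_eq_of_mem_support hF hs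
    have hiff : k = s 2 ↔ d - k = s 0 + s 1 := by omega
    have h : algebraMap ℂ (Polynomial (Polynomial ℂ)) (coeff s F) *
        ∏ i, (![Polynomial.X, Polynomial.C Polynomial.X * Polynomial.X, 1] :
        Fin 3 → Polynomial (Polynomial ℂ)) i ^ s i =
        Polynomial.C (Polynomial.C (coeff s F) * Polynomial.X ^ s 1) *
          Polynomial.X ^ (s 0 + s 1) := by
      rw [Fin.prod_univ_three]
      simp only [Matrix.cons_val, one_pow, map_mul, map_pow, Polynomial.algebraMap_apply,
        Polynomial.algebraMap_eq]
      ring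
    rw [h, Polynomial.coeff_C_mul_X_pow]
    exact if_congr hiff.symm rfl rfl
  have hdvd : G ∈ Ideal.span {Polynomial.X} ^ m := by
    refine aeval_mem_pow_of_mem_pointIdeal_pow _ _ (fun j => ?_) hm
    rw [Ideal.mem_span_singleton]
    fin_cases j <;> simp
  rw [Ideal.span_singleton_pow, Ideal.mem_span_singleton, Polynomial.X_pow_dvd_iff] at hdvd
  rw [← hG, hdvd _ (by omega)]

lemma pow_dvd_coeff_of_mem_span_pow {R : Type*} [CommRing R] (u : R) {n : ℕ} {g : Polynomial R}
    (hg : g ∈ Ideal.span {Polynomial.C u, Polynomial.X} ^ n) (k : ℕ) :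
    u ^ (n - k) ∣ g.coeff k := by
  induction n generalizing g k with
  | zero => simp
  | succ n ih =>
    have hmul : ∀ a y : Polynomial R, y ∈ Ideal.span {Polynomial.C u, Polynomial.X} ^ n →
        ∀ k, u ^ (n - k) ∣ (a * y).coeff k := fun a y hy => ih (Ideal.mul_mem_left _ a hy)
    rw [pow_succ'] at hg
    induction hg using Submodule.mul_induction_on' with
    | mem_mul_mem x hx y hy =>
      obtain ⟨a, b, rfl⟩ := Ideal.mem_span_pair.mp hx
      have h1 : (a * Polynomial.C u + b * Polynomial.X) * y =
        Polynomial.C u * (a * y) + Polynomial.X * (b * y) := by ring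
      rw [h1, Polynomial.coeff_add, Polynomial.coeff_C_mul]
      refine dvd_add ?_ ?_
      · refine (pow_dvd_pow u (by omega : n + 1 - k ≤ 1 + (n - k))).trans ?_
        rw [pow_add, pow_one]
        exact mul_dvd_mul_left u (hmul a y hy k)
      · rcases k with _ | k
        · simp
        · rw [Polynomial.coeff_X_mul, Nat.add_sub_add_right]
          exact hmul b y hy k
    | add x hx y hy h1 h2 => rw [Polynomial.coeff_add]; exact dvd_add h1 h2

lemma eq_zero_of_pow_dvd {e : ℕ} (he : 1 ≤ e) {P A B D : Polynomial ℂ} (hP : P.Monic)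
    (hPe : P.natDegree = 2 * e) (hA : A.natDegree ≤ 10 * e - 2)
    (hB : B.natDegree ≤ 10 * e - 1) (hD : D.natDegree ≤ 10 * e)
    (h4 : P ^ 4 ∣ A) (h5 : P ^ 5 ∣ 2 * A * Polynomial.X ^ e + B)
    (h6 : P ^ 6 ∣ A * (Polynomial.X ^ e) ^ 2 + B * Polynomial.X ^ e + D)
    (hc : A.coeff (8 * e) = 0) : A = 0 ∧ B = 0 ∧ D = 0 := by
  have hX : ∀ Q : Polynomial ℂ, Q ≠ 0 → ∀ n, (Q * Polynomial.X ^ n).natDegree = Q.natDegree + n :=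
    fun Q hQ n => Polynomial.natDegree_mul_X_pow n hQ
  have hXle : ∀ (Q : Polynomial ℂ) n, (Q * Polynomial.X ^ n).natDegree ≤ Q.natDegree + n :=
    fun Q n => Polynomial.natDegree_mul_le.trans (by simp)
  have hPpow : ∀ (Q : Polynomial ℂ) n, Q ≠ 0 →
      (P ^ n * Q).natDegree = n * (2 * e) + Q.natDegree := by
    intro Q n hQ
    rw [(hP.pow n).natDegree_mul' hQ, hP.natDegree_pow, hPe]
  have hsmall : ∀ (Q : Polynomial ℂ) n N, (P ^ n * Q).natDegree ≤ n * (2 * e) + N →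
      Q.natDegree ≤ N := by
    intro Q n N h
    by_cases hQ : Q = 0
    · simp [hQ]
    · rw [hPpow Q n hQ] at h; omega
  have hzero : ∀ (Q : Polynomial ℂ) n, (P ^ n * Q).natDegree < n * (2 * e) → Q = 0 := by
    intro Q n h
    by_contra hQ
    rw [hPpow Q n hQ] at h; omega
  obtain ⟨A1, rfl⟩ := h4
  obtain ⟨B1, hB1⟩ := h5
  obtain ⟨D1, hD1⟩ := h6
  have hA1 : A1.natDegree ≤ 2 * e - 2 := hsmall A1 4 _ (by omega)
  have hD1' : D1 = 0 := by
    refine hzero D1 6 ?_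
    rw [← hD1]
    refine (Polynomial.natDegree_add_le_of_degree_le (n := 12 * e - 1)
      (Polynomial.natDegree_add_le_of_degree_le ?_ ?_) (by omega)).trans_lt (by omega)
    · rw [← pow_mul]
      exact (hXle _ _).trans (by omega)
    · exact (hXle _ _).trans (by omega)
  rw [hD1', mul_zero] at hD1
  have hU : B = P ^ 4 * (P * B1 - 2 * A1 * Polynomial.X ^ e) := by linear_combination hB1
  set U := P * B1 - 2 * A1 * Polynomial.X ^ e with hUdef
  have hUdeg : U.natDegree ≤ 2 * e - 1 := hsmall U 4 _ (by rw [← hU]; omega)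
  have hV : D = P ^ 4 * (-(A1 * Polynomial.X ^ e + U) * Polynomial.X ^ e) := by
    rw [hU] at hD1
    linear_combination hD1
  have hVdeg : (A1 * Polynomial.X ^ e + U).natDegree ≤ e := by
    have h := hsmall _ 4 (2 * e) (by rw [← hV]; omega)
    by_cases h0 : -(A1 * Polynomial.X ^ e + U) = 0
    · simp [neg_eq_zero.mp h0]
    · rw [hX _ h0, Polynomial.natDegree_neg] at h
      omega
  have hAX : (A1 * Polynomial.X ^ e).natDegree ≤ 2 * e - 1 := by
    have h : A1 * Polynomial.X ^ e = (A1 * Polynomial.X ^ e + U) - U := by ring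
    rw [h]
    exact (Polynomial.natDegree_sub_le _ _).trans (by omega)
  have hB10 : B1 = 0 := by
    refine hzero B1 1 ?_
    have h : P ^ 1 * B1 = U + Polynomial.C 2 * (A1 * Polynomial.X ^ e) := by
      rw [hUdef, Polynomial.C_ofNat]; ring
    rw [h]
    exact (Polynomial.natDegree_add_le_of_degree_le hUdeg
      ((Polynomial.natDegree_C_mul_le _ _).trans hAX)).trans_lt (by omega)
  have hA10 : A1 = 0 := by
    by_contra hne
    have h : A1 * Polynomial.X ^ e + U = -(A1 * Polynomial.X ^ e) := by
      rw [hUdef, hB10]; ring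
    rw [h, Polynomial.natDegree_neg, hX _ hne] at hVdeg
    obtain ⟨c, rfl⟩ : ∃ c, A1 = Polynomial.C c :=
      ⟨_, Polynomial.eq_C_of_natDegree_eq_zero (by omega)⟩
    have h1 : (P ^ 4).coeff (8 * e) = 1 := by
      have h2 : (P ^ 4).natDegree = 8 * e := by rw [hP.natDegree_pow, hPe]; ring
      rw [← h2]
      exact (hP.pow 4).coeff_natDegree
    rw [Polynomial.coeff_mul_C, h1, one_mul] at hc
    exact hne (by simp [hc])
  have hU0 : U = 0 := by rw [hUdef, hB10, hA10]; ring
  refine ⟨by rw [hA10, mul_zero], by rw [hU, hU0, mul_zero], by rw [hV, hA10, hU0]; ring⟩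

/-- The configuration of the point `(0 : 0 : 1)` and `n` points `(1 : t : t ^ e)`. -/
noncomputable def graphConfig (n e : ℕ) : Fin (n + 1) → Fin 3 → ℂ :=
  Fin.cons ![0, 0, 1] fun i => ![1, (i : ℕ), (i : ℕ) ^ e]

lemma taylor_dehomogenize (r : Polynomial ℂ) (F : MvPolynomial (Fin 3) ℂ) :
    Polynomial.taylor r (dehomogenize F) =
      aeval (![1, Polynomial.C Polynomial.X, Polynomial.X + Polynomial.C r] :
        Fin 3 → Polynomial (Polynomial ℂ)) F := by
  have h : ((Polynomial.taylorAlgHom r).restrictScalars ℂ).comp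
      (aeval (![1, Polynomial.C Polynomial.X, Polynomial.X] :
        Fin 3 → Polynomial (Polynomial ℂ))) =
      aeval (![1, Polynomial.C Polynomial.X, Polynomial.X + Polynomial.C r] :
        Fin 3 → Polynomial (Polynomial ℂ)) := by
    apply MvPolynomial.algHom_ext
    intro j
    fin_cases j <;> simp
  exact DFunLike.congr_fun h F

lemma pow_dvd_coeff_taylor_dehomogenize {e n : ℕ} {F : MvPolynomial (Fin 3) ℂ}
    {t : ℂ} (hF : F ∈ pointIdeal ![1, t, t ^ e] ^ n) (k : ℕ) :
    (Polynomial.X - Polynomial.C t) ^ (n - k) ∣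
      (Polynomial.taylor (Polynomial.X ^ e) (dehomogenize F)).coeff k := by
  rw [taylor_dehomogenize]
  refine pow_dvd_coeff_of_mem_span_pow _
    (aeval_mem_pow_of_mem_pointIdeal_pow _ _ (fun j => ?_) hF) k
  fin_cases j
  · simp
  · refine Ideal.subset_span (Or.inl ?_)
    simp [Polynomial.algebraMap_apply]
  · obtain ⟨w, hw⟩ := sub_dvd_pow_sub_pow (Polynomial.X : Polynomial ℂ) (Polynomial.C t) e
    refine Ideal.mem_span_pair.mpr ⟨Polynomial.C w, 1, ?_⟩
    have h := congrArg (Polynomial.C (R := Polynomial ℂ)) hw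
    simp [Polynomial.algebraMap_apply] at h ⊢
    linear_combination -h

lemma prod_pow_dvd {n k : ℕ} {A : Polynomial ℂ}
    (h : ∀ i : Fin n, (Polynomial.X - Polynomial.C ((i : ℕ) : ℂ)) ^ k ∣ A) :
    (∏ i : Fin n, (Polynomial.X - Polynomial.C ((i : ℕ) : ℂ))) ^ k ∣ A := by
  rw [← Finset.prod_pow]
  refine Finset.prod_dvd_of_coprime (fun i _ j _ hij => ?_) fun i _ => h i
  refine IsCoprime.pow (Polynomial.pairwise_coprime_X_sub_C (s := fun i : Fin n => ((i : ℕ) : ℂ))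
    ?_ hij)
  intro a b hab
  exact Fin.ext (Nat.cast_injective hab)

lemma eq_zero_of_mem_linSys_graphConfig {e : ℕ} (he : 1 ≤ e) {F : MvPolynomial (Fin 3) ℂ}
    (hF : F ∈ linSys (graphConfig (2 * e) e) (10 * e) (qh (2 * e) (10 * e - 2)))
    (hc : coeff (Finsupp.equivFunOnFinite.symm ![2 * e - 2, 8 * e, 2]) F = 0) : F = 0 := by
  obtain ⟨hhom, hmem⟩ := mem_linSys_iff.mp hF
  have h0 : F ∈ pointIdeal ![0, 0, 1] ^ (10 * e - 2) := hmem 0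
  have h6 : ∀ i : Fin (2 * e), F ∈ pointIdeal ![1, ((i : ℕ) : ℂ), ((i : ℕ) : ℂ) ^ e] ^ 6 := by
    intro i
    have h := hmem i.succ
    rw [qh, if_neg (Fin.succ_ne_zero i)] at h
    exact h
  refine eq_zero_of_dehomogenize_eq_zero hhom ?_
  set f := dehomogenize F with hf
  have hf2 : ∀ k, 2 < k → f.coeff k = 0 := fun k hk =>
    coeff_dehomogenize_eq_zero hhom h0 (by omega)
  have hquad : f = Polynomial.C (f.coeff 2) * Polynomial.X ^ 2 +
      Polynomial.C (f.coeff 1) * Polynomial.X + Polynomial.C (f.coeff 0) := by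
    refine Polynomial.eq_quadratic_of_degree_le_two ?_
    rw [Polynomial.degree_le_iff_coeff_zero]
    exact fun k hk => hf2 k (by exact_mod_cast hk)
  have htaylor : Polynomial.taylor (Polynomial.X ^ e) f =
      Polynomial.C (f.coeff 2) * Polynomial.X ^ 2 +
      Polynomial.C (2 * f.coeff 2 * Polynomial.X ^ e + f.coeff 1) * Polynomial.X +
      Polynomial.C (f.coeff 2 * (Polynomial.X ^ e) ^ 2 + f.coeff 1 * Polynomial.X ^ e +
        f.coeff 0) := by
    conv_lhs => rw [hquad]
    simp only [map_add, Polynomial.taylor_mul, Polynomial.taylor_C, Polynomial.taylor_X,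
      Polynomial.taylor_pow, map_mul, map_pow, Polynomial.C_ofNat]
    ring
  have hdvd : ∀ k, (∏ i : Fin (2 * e), (Polynomial.X - Polynomial.C ((i : ℕ) : ℂ))) ^ (6 - k) ∣
      (Polynomial.taylor (Polynomial.X ^ e) f).coeff k := fun k =>
    prod_pow_dvd fun i => pow_dvd_coeff_taylor_dehomogenize (h6 i) k
  rw [htaylor] at hdvd
  obtain ⟨hA, hB, hD⟩ := eq_zero_of_pow_dvd he
    (Polynomial.monic_prod_X_sub_C (fun i : Fin (2 * e) => ((i : ℕ) : ℂ)) Finset.univ)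
    (by rw [Polynomial.natDegree_finsetProd_X_sub_C_eq_card]; simp)
    (natDegree_coeff_dehomogenize_le hhom 2) (natDegree_coeff_dehomogenize_le hhom 1)
    (natDegree_coeff_dehomogenize_le hhom 0)
    (by simpa [-map_add, -map_mul, -map_natCast, Polynomial.coeff_X] using hdvd 2)
    (by simpa [-map_add, -map_mul, -map_natCast, Polynomial.coeff_X] using hdvd 1)
    (by simpa [-map_add, -map_mul, -map_natCast, Polynomial.coeff_X] using hdvd 0)
    (by
      rw [← hc, ← coeff_dehomogenize_coeff hhom (s := Finsupp.equivFunOnFinite.symm _)]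
      · simp
      · rw [Finsupp.degree_eq_sum, Fin.sum_univ_three]
        simp
        omega)
  rw [hquad, hf, hA, hB, hD]
  simp

lemma virtDim_qh {e : ℕ} (he : 1 ≤ e) :
    virtDim (10 * e) (qh (2 * e) (10 * e - 2)) = -12 * (e : ℤ) - 1 := by
  have h2 : ((10 * e - 2 : ℕ) : ℤ) = 10 * e - 2 := by omega
  have h3 : ((10 * e : ℕ) : ℤ) * ((10 * e : ℕ) + 3) = (50 * (e : ℤ) ^ 2 + 15 * e) * 2 := by
    push_cast; ring
  have h4 : (10 * e - 2 : ℤ) * (10 * e - 2 + 1) = (50 * (e : ℤ) ^ 2 - 15 * e + 1) * 2 := by ring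
  rw [virtDim, Fin.sum_univ_succ, h3]
  simp only [qh, if_true, Fin.succ_ne_zero, if_false, h2, h4]
  rw [Int.mul_ediv_cancel _ (by norm_num), Int.mul_ediv_cancel _ (by norm_num)]
  simp
  ring

theorem special_L_10e_10esub2 (e : ℕ) (he : 1 ≤ e) :
    virtDim (10 * e) (qh (2 * e) (10 * e - 2)) = -12 * (e : ℤ) - 1 ∧
    Generically (2 * e + 1) (fun p =>
      projDim p (10 * e) (qh (2 * e) (10 * e - 2)) = 0 ∧
      projDim p (10 * e) (qh (2 * e) (10 * e - 2)) >
        max (-1) (virtDim (10 * e) (qh (2 * e) (10 * e - 2)))) := by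
  refine ⟨virtDim_qh he, ?_⟩
  obtain ⟨P, hP0, hP⟩ := exists_polynomial_finrank_linSys_le_one (qh (2 * e) (10 * e - 2))
    (graphConfig (2 * e) e)
    (lcoeff ℂ (Finsupp.equivFunOnFinite.symm ![2 * e - 2, 8 * e, 2]))
    (fun F hF hc => eq_zero_of_mem_linSys_graphConfig he hF hc)
  refine ⟨P * X (0, 2), mul_ne_zero hP0 (X_ne_zero _), fun p _ hp => ?_⟩
  rw [map_mul, eval_X] at hp
  have hle := hP p (left_ne_zero_of_mul hp)
  have hge := one_le_finrank_linSys he p (right_ne_zero_of_mul hp)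
  have h0 : projDim p (10 * e) (qh (2 * e) (10 * e - 2)) = 0 := by
    rw [projDim]
    omega
  refine ⟨h0, ?_⟩
  rw [h0, virtDim_qh he, gt_iff_lt, max_lt_iff]
  omega
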